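/- The Zariski closure of the adjoint orbit of the Jordan matrix J_{μ}(z) (single eigenvalue z, Jordan block sizes given by the partition μ of n) in gl_n over an algebraically closed field is the disjoint union of the adjoint orbits of J_{ρ}(z) over all partitions ρ ⪯ μ in the dominance order. Equivalently, a matrix X with (X - z·Id) nilpotent lies in the closure of the orbit of J_μ(z) if and only if for all k ≥ 1, rank((X - z·Id)^k) ≤ rank((J_μ(z) - z·Id)^k), which is equivalent to the Jordan type of X being ⪯ μ in dominance order. -/

import Mathlib

/-!
STATEMENT 17. Over an algebraically closed field `K`, the Zariski closure of the adjoint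
orbit of the Jordan matrix `J_μ(z)` (single eigenvalue `z`, Jordan block sizes the parts of
the partition `μ` of `n`) is the disjoint union of the adjoint orbits of `J_ρ(z)` over all
partitions `ρ ⪯ μ` in the dominance order.  Equivalently, for `X` with `X - z·Id`
nilpotent, `X` lies in this closure iff `rank((X - z·Id)^k) ≤ rank((J_μ(z) - z·Id)^k)` for
all `k ≥ 1` (which is equivalent to the Jordan type of `X` being `⪯ μ`).
-/

open Matrix

/-- Partial sums of a list (positions of Jordan block boundaries). -/
def partialSums (l : List ℕ) : List ℕ :=
  (List.range l.length).map fun k => (l.take (k + 1)).sum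

/-- The Jordan matrix with single eigenvalue `z` and block sizes the parts of `μ`
(rows sorted decreasingly): `z` on the diagonal and `1` on the superdiagonal except at
block boundaries. -/
def jordanOf {K : Type*} [Field K] {n : ℕ} (z : K) (mu : Nat.Partition n) :
    Matrix (Fin n) (Fin n) K :=
  Matrix.of fun i j =>
    if (i : ℕ) = (j : ℕ) then z
    else if (j : ℕ) = (i : ℕ) + 1 ∧
        ((i : ℕ) + 1) ∉ partialSums ((mu.parts.sort (· ≤ ·)).reverse) then 1
    else 0

/-- The adjoint (conjugation) orbit of a matrix under `GL_n`. -/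
def adjOrbit {K : Type*} [Field K] {n : ℕ} (A : Matrix (Fin n) (Fin n) K) :
    Set (Matrix (Fin n) (Fin n) K) :=
  {B | ∃ g : (Matrix (Fin n) (Fin n) K)ˣ,
    B = (g : Matrix (Fin n) (Fin n) K) * A * ((g⁻¹ : (Matrix (Fin n) (Fin n) K)ˣ) :
      Matrix (Fin n) (Fin n) K)}

/-- The Zariski closure of a set of `n × n` matrices: the common zero locus of all
polynomial functions vanishing on the set. -/
def zariskiClosure {K : Type*} [Field K] {n : ℕ}
    (S : Set (Matrix (Fin n) (Fin n) K)) : Set (Matrix (Fin n) (Fin n) K) :=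
  {X | ∀ f : MvPolynomial (Fin n × Fin n) K,
    (∀ A ∈ S, MvPolynomial.eval (fun p => A p.1 p.2) f = 0) →
      MvPolynomial.eval (fun p => X p.1 p.2) f = 0}

/-- The dominance order on partitions of `n`: `ρ ⪯ μ` iff every partial sum of the
decreasingly sorted parts of `ρ` is at most the corresponding partial sum for `μ`. -/
def DominatedBy {n : ℕ} (rho mu : Nat.Partition n) : Prop :=
  ∀ k : ℕ, (((rho.parts.sort (· ≤ ·)).reverse.take k).sum)
    ≤ (((mu.parts.sort (· ≤ ·)).reverse.take k).sum)

section LinearAlgebra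

open Module

variable {K V V₂ : Type*} [Field K] [AddCommGroup V] [Module K V]
  [AddCommGroup V₂] [Module K V₂]

/-- A relative complement of a subspace inside a larger subspace. -/
lemma Submodule.exists_relCompl {A B : Submodule K V} (h : A ≤ B) :
    ∃ C : Submodule K V, C ≤ B ∧ Disjoint A C ∧ A ⊔ C = B := by
  obtain ⟨D, hD⟩ := A.exists_isCompl
  refine ⟨D ⊓ B, inf_le_right, hD.disjoint.mono_right inf_le_left, ?_⟩
  rw [← sup_inf_assoc_of_le D h, hD.sup_eq_top, top_inf_eq]

lemma Submodule.finrank_sup_of_disjoint [FiniteDimensional K V] {A C : Submodule K V}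
    (h : Disjoint A C) :
    finrank K ↥(A ⊔ C) = finrank K A + finrank K C := by
  have := Submodule.finrank_sup_add_finrank_inf_eq A C
  rwa [h.eq_bot, finrank_bot, add_zero] at this

/-- Linear maps on two disjoint subspaces extend simultaneously to the whole space. -/
lemma Submodule.exists_extend_of_disjoint {A C : Submodule K V} (h : Disjoint A C)
    (f : A →ₗ[K] V₂) (g : C →ₗ[K] V₂) :
    ∃ F : V →ₗ[K] V₂, (∀ x : A, F x = f x) ∧ (∀ x : C, F x = g x) ∧
      LinearMap.range F ≤ LinearMap.range f ⊔ LinearMap.range g := by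
  have hinj : LinearMap.ker (A.subtype.coprod C.subtype) = ⊥ := by
    rw [LinearMap.ker_coprod_of_disjoint_range _ _ (by simpa using h)]
    simp
  obtain ⟨p, hp⟩ := LinearMap.exists_leftInverse_of_injective _ hinj
  refine ⟨f.coprod g ∘ₗ p, fun x => ?_, fun x => ?_, ?_⟩
  · have := LinearMap.congr_fun hp (x, 0)
    simp only [LinearMap.comp_apply, LinearMap.coprod_apply, LinearMap.id_apply, map_zero,
      add_zero, Submodule.subtype_apply] at this
    simp [this]
  · have := LinearMap.congr_fun hp (0, x)
    simp only [LinearMap.comp_apply, LinearMap.coprod_apply, LinearMap.id_apply, map_zero,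
      zero_add, Submodule.subtype_apply] at this
    simp [this]
  · rw [← LinearMap.range_coprod]
    exact LinearMap.range_comp_le_range _ _

lemma Submodule.exists_between_finrank_eq [FiniteDimensional K V] {A B : Submodule K V}
    (h : A ≤ B) {d : ℕ} (h1 : finrank K A ≤ d) (h2 : d ≤ finrank K B) :
    ∃ G : Submodule K V, A ≤ G ∧ G ≤ B ∧ finrank K G = d := by
  obtain ⟨C, hCB, hd, hs⟩ := Submodule.exists_relCompl h
  have hC := Submodule.finrank_sup_of_disjoint hd
  rw [hs] at hC
  obtain ⟨f, hf⟩ := (finrank_le_iff_exists_linearMap (R := K)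
    (M := Fin (d - finrank K A) → K) (M' := C)).1 (by rw [finrank_fin_fun]; omega)
  have hle : LinearMap.range (C.subtype ∘ₗ f) ≤ C := by
    rintro _ ⟨x, rfl⟩
    exact (f x).2
  have hinj : Function.Injective (C.subtype ∘ₗ f) := by
    rw [LinearMap.coe_comp]
    exact C.injective_subtype.comp hf
  refine ⟨A ⊔ LinearMap.range (C.subtype ∘ₗ f), le_sup_left, sup_le h (hle.trans hCB), ?_⟩
  rw [Submodule.finrank_sup_of_disjoint (hd.mono_right hle),
    LinearMap.finrank_range_of_inj hinj, finrank_fin_fun]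
  omega

/-- Given an increasing chain of subspaces and an intermediate dimension, some subspace of that
dimension is comparable with every member of the chain. -/
lemma Submodule.exists_comparable_of_monotone [FiniteDimensional K V]
    (C : ℕ → Submodule K V) (hC : Monotone C) {m d : ℕ}
    (h0 : finrank K (C 0) ≤ d) (hm : d ≤ finrank K (C m)) :
    ∃ G : Submodule K V, finrank K G = d ∧ C 0 ≤ G ∧ G ≤ C m ∧ ∀ j, C j ≤ G ∨ G ≤ C j := by
  classical
  have hex : ∃ i, d ≤ finrank K (C i) := ⟨m, hm⟩
  have hspec := Nat.find_spec hex
  rcases hi : Nat.find hex with _ | i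
  · rw [hi] at hspec
    exact ⟨C 0, le_antisymm h0 hspec, le_rfl, hC (Nat.zero_le _),
      fun j => Or.inr (hC (Nat.zero_le _))⟩
  · rw [hi] at hspec
    have hlt : finrank K (C i) < d := not_le.1 (Nat.find_min hex (m := i) (by omega))
    obtain ⟨G, h1, h2, h3⟩ :=
      Submodule.exists_between_finrank_eq (hC (Nat.le_succ i)) hlt.le hspec
    have him : i + 1 ≤ m := hi ▸ Nat.find_min' hex hm
    refine ⟨G, h3, (hC (Nat.zero_le _)).trans h1, h2.trans (hC him), fun j => ?_⟩
    rcases Nat.lt_or_ge i j with hj | hj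
    · exact Or.inr (h2.trans (hC hj))
    · exact Or.inl ((hC hj).trans h1)

lemma Submodule.finrank_map_add_finrank_inf_ker [FiniteDimensional K V]
    (f : V →ₗ[K] V₂) (W : Submodule K V) :
    finrank K (W.map f) + finrank K ↥(LinearMap.ker f ⊓ W) = finrank K W := by
  have h := LinearMap.finrank_range_add_finrank_ker (f.domRestrict W)
  rw [LinearMap.range_domRestrict, LinearMap.ker_domRestrict] at h
  rw [← h, ← Submodule.finrank_map_subtype_eq W, Submodule.map_comap_subtype, inf_comm]

lemma LinearMap.range_pow_succ (N : End K V) (k : ℕ) :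
    LinearMap.range (N ^ (k + 1)) = (LinearMap.range (N ^ k)).map N := by
  rw [pow_succ', Module.End.mul_eq_comp, LinearMap.range_comp]

lemma LinearMap.finrank_range_pow_convex [FiniteDimensional K V] (N : End K V) (k : ℕ) :
    2 * finrank K (LinearMap.range (N ^ (k + 1))) ≤
      finrank K (LinearMap.range (N ^ k)) + finrank K (LinearMap.range (N ^ (k + 2))) := by
  have h1 := Submodule.finrank_map_add_finrank_inf_ker N (LinearMap.range (N ^ k))
  have h2 := Submodule.finrank_map_add_finrank_inf_ker N (LinearMap.range (N ^ (k + 1)))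
  rw [← LinearMap.range_pow_succ] at h1 h2
  have h3 : LinearMap.ker N ⊓ LinearMap.range (N ^ (k + 1)) ≤
      LinearMap.ker N ⊓ LinearMap.range (N ^ k) :=
    inf_le_inf_left _ (by rw [pow_succ]; exact LinearMap.range_comp_le_range _ _)
  have h4 := Submodule.finrank_mono h3
  rw [show k + 1 + 1 = k + 2 from rfl] at h2
  omega

lemma LinearMap.finrank_range_pow_antitone [FiniteDimensional K V] (N : End K V) :
    Antitone fun k => finrank K (LinearMap.range (N ^ k)) :=
  antitone_nat_of_succ_le fun k => Submodule.finrank_mono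
    (by rw [pow_succ]; exact LinearMap.range_comp_le_range _ _)

lemma LinearMap.finrank_range_restrict_pow (N : End K V) (k : ℕ) :
    finrank K (LinearMap.range ((N.rangeRestrict ∘ₗ (LinearMap.range N).subtype) ^ k)) =
      finrank K (LinearMap.range (N ^ (k + 1))) := by
  have hcomm : (LinearMap.range N).subtype ∘ₗ
      ((N.rangeRestrict ∘ₗ (LinearMap.range N).subtype) ^ k) =
        (N ^ k) ∘ₗ (LinearMap.range N).subtype := by
    induction k with
    | zero => rfl
    | succ k ih =>
      rw [pow_succ, Module.End.mul_eq_comp, ← LinearMap.comp_assoc, ih, pow_succ]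
      rfl
  rw [← Submodule.finrank_map_subtype_eq, ← LinearMap.range_comp, hcomm, LinearMap.range_comp,
    Submodule.range_subtype, pow_succ, Module.End.mul_eq_comp, LinearMap.range_comp]


lemma LinearMap.finrank_range_pow_zero (N : End K V) :
    finrank K (LinearMap.range (N ^ 0)) = finrank K V := by
  rw [pow_zero, Module.End.one_eq_id, LinearMap.range_id, finrank_top]

/-- One step in the classification of nilpotent endomorphisms: an isomorphism between the ranges
intertwining the restrictions extends to the whole spaces when the first ranks agree. -/
lemma LinearMap.exists_intertwining_of_range [FiniteDimensional K V] [FiniteDimensional K V₂]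
    (N : End K V) (N' : End K V₂) (h0 : finrank K V = finrank K V₂)
    (h1 : finrank K (LinearMap.range N) = finrank K (LinearMap.range N'))
    (h2 : finrank K (LinearMap.range (N ^ 2)) = finrank K (LinearMap.range (N' ^ 2)))
    (e : LinearMap.range N ≃ₗ[K] LinearMap.range N')
    (he : ∀ x, N' (e x) = e (N.rangeRestrict x)) :
    ∃ E : V ≃ₗ[K] V₂, ∀ x, E (N x) = N' (E x) := by
  obtain ⟨C, hCk, hCd, hCs⟩ := Submodule.exists_relCompl
    (inf_le_left : LinearMap.ker N ⊓ LinearMap.range N ≤ LinearMap.ker N)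
  obtain ⟨C', hCk', hCd', hCs'⟩ := Submodule.exists_relCompl
    (inf_le_left : LinearMap.ker N' ⊓ LinearMap.range N' ≤ LinearMap.ker N')
  have hdim : finrank K C = finrank K C' := by
    have a1 := Submodule.finrank_sup_of_disjoint hCd
    have a2 := Submodule.finrank_sup_of_disjoint hCd'
    have b1 := Submodule.finrank_map_add_finrank_inf_ker N (LinearMap.range N)
    have b2 := Submodule.finrank_map_add_finrank_inf_ker N' (LinearMap.range N')
    rw [hCs] at a1
    rw [hCs'] at a2
    rw [← LinearMap.range_comp, ← Module.End.mul_eq_comp, ← sq] at b1 b2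
    have c1 := LinearMap.finrank_range_add_finrank_ker N
    have c2 := LinearMap.finrank_range_add_finrank_ker N'
    omega
  have hd : Disjoint (LinearMap.range N) C := by
    rw [Submodule.disjoint_def] at hCd ⊢
    exact fun x hx hxC => hCd x ⟨hCk hxC, hx⟩ hxC
  let c : C ≃ₗ[K] C' := LinearEquiv.ofFinrankEq _ _ hdim
  obtain ⟨s, hs⟩ := LinearMap.exists_rightInverse_of_surjective N'.rangeRestrict
    N'.range_rangeRestrict
  have hs' : ∀ y, N' (s y) = y := fun y => congrArg Subtype.val (LinearMap.congr_fun hs y)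
  let E₀ : V →ₗ[K] V₂ := s ∘ₗ e.toLinearMap ∘ₗ N.rangeRestrict
  have hE₀ : ∀ x, N' (E₀ x) = e (N.rangeRestrict x) := fun x => hs' _
  obtain ⟨F, hF1, hF2, hF3⟩ := Submodule.exists_extend_of_disjoint hd
    (E₀ ∘ₗ (LinearMap.range N).subtype - (LinearMap.range N').subtype ∘ₗ e.toLinearMap)
    (E₀ ∘ₗ C.subtype - C'.subtype ∘ₗ c.toLinearMap)
  have hFker : ∀ x, N' (F x) = 0 := by
    intro x
    have hle : LinearMap.range F ≤ LinearMap.ker N' := by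
      refine hF3.trans (sup_le ?_ ?_)
      · rintro _ ⟨y, rfl⟩
        simp [hE₀, he]
      · rintro _ ⟨y, rfl⟩
        have hy : N.rangeRestrict (y : V) = 0 := Subtype.ext (hCk y.2)
        have hy' : N' (c y) = 0 := hCk' (c y).2
        simp [hE₀, hy, hy']
    exact hle ⟨x, rfl⟩
  let E₁ : V →ₗ[K] V₂ := E₀ - F
  have hE1 : ∀ x : LinearMap.range N, E₁ x = e x := by
    intro x
    simp [E₁, hF1]
  have hE2 : ∀ x : C, E₁ x = c x := by
    intro x
    simp [E₁, hF2]
  have hE3 : ∀ x, N' (E₁ x) = e (N.rangeRestrict x) := by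
    intro x
    simp [E₁, hFker, hE₀]
  have hinj : Function.Injective E₁ := by
    rw [← LinearMap.ker_eq_bot, Submodule.eq_bot_iff]
    intro x hx
    rw [LinearMap.mem_ker] at hx
    have hxk : x ∈ LinearMap.ker N := by
      have := hE3 x
      rw [hx, map_zero, eq_comm, Submodule.coe_eq_zero, e.map_eq_zero_iff] at this
      exact congrArg Subtype.val this
    rw [← hCs] at hxk
    obtain ⟨y, hy, w, hw, rfl⟩ := Submodule.mem_sup.1 hxk
    have ey := hE1 ⟨y, hy.2⟩
    have ew := hE2 ⟨w, hw⟩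
    simp only at ey ew
    rw [map_add, ey, ew] at hx
    have hker : ((e ⟨y, hy.2⟩ : LinearMap.range N') : V₂) ∈
        LinearMap.ker N' ⊓ LinearMap.range N' := by
      refine Submodule.mem_inf.2 ⟨LinearMap.mem_ker.2 ?_, (e _).2⟩
      rw [he]
      have : N.rangeRestrict y = 0 := Subtype.ext hy.1
      simp [this]
    have hz := (Submodule.disjoint_def.1 hCd') _ hker (by
      rw [eq_neg_of_add_eq_zero_left hx]
      exact C'.neg_mem (c _).2)
    rw [hz, zero_add, Submodule.coe_eq_zero, c.map_eq_zero_iff] at hx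
    rw [Submodule.coe_eq_zero, e.map_eq_zero_iff] at hz
    have h1 : y = 0 := congrArg Subtype.val hz
    have h2 : w = 0 := congrArg Subtype.val hx
    rw [h1, h2, add_zero]
  refine ⟨LinearEquiv.ofInjectiveOfFinrankEq E₁ hinj h0, fun x => ?_⟩
  change E₁ (N x) = N' (E₁ x)
  rw [hE3]
  exact hE1 (N.rangeRestrict x)

end LinearAlgebra

section Nilpotent

open Module

universe u

/-- Nilpotent endomorphisms whose powers have the same ranks are conjugate. -/
lemma LinearMap.exists_intertwining_of_finrank_range_pow_eq {K : Type*} [Field K] (m : ℕ) :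
    ∀ (V V₂ : Type u) [AddCommGroup V] [Module K V] [AddCommGroup V₂] [Module K V₂]
      [FiniteDimensional K V] [FiniteDimensional K V₂] (N : End K V) (N' : End K V₂),
      N ^ m = 0 →
      (∀ k, finrank K (LinearMap.range (N ^ k)) = finrank K (LinearMap.range (N' ^ k))) →
      ∃ E : V ≃ₗ[K] V₂, ∀ x, E (N x) = N' (E x) := by
  induction m with
  | zero =>
    intro V V₂ _ _ _ _ _ _ N N' hN hr
    have hV : ∀ x : V, x = 0 := fun x => LinearMap.congr_fun hN x
    have h0 := hr 0
    rw [LinearMap.finrank_range_pow_zero, LinearMap.finrank_range_pow_zero] at h0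
    refine ⟨LinearEquiv.ofFinrankEq _ _ h0, fun x => ?_⟩
    rw [hV x]
    simp
  | succ m ih =>
    intro V V₂ _ _ _ _ _ _ N N' hN hr
    have h0 := hr 0
    have h1 := hr 1
    rw [LinearMap.finrank_range_pow_zero, LinearMap.finrank_range_pow_zero] at h0
    rw [pow_one, pow_one] at h1
    obtain ⟨e, he⟩ := ih (LinearMap.range N) (LinearMap.range N')
      (N.rangeRestrict ∘ₗ (LinearMap.range N).subtype)
      (N'.rangeRestrict ∘ₗ (LinearMap.range N').subtype)
      (by rw [← LinearMap.range_eq_bot, ← Submodule.finrank_eq_zero,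
            LinearMap.finrank_range_restrict_pow, hN]
          simp)
      (fun k => by
        rw [LinearMap.finrank_range_restrict_pow, LinearMap.finrank_range_restrict_pow, hr])
    exact LinearMap.exists_intertwining_of_range N N' h0 h1 (hr 2) e
      fun x => (congrArg Subtype.val (he x)).symm

variable {K V V₂ : Type*} [Field K] [AddCommGroup V] [Module K V]
  [AddCommGroup V₂] [Module K V₂]

/-- The inductive step of `LinearMap.exists_flag`: from the member of dimension `r k` to the
member of dimension `r (k + 1)`. -/
lemma LinearMap.exists_flag_step [FiniteDimensional K V] (N : End K V) {m : ℕ} (hN : N ^ m = 0)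
    {r : ℕ → ℕ} (hr : Antitone r) (hconv : ∀ k j, r (k + 1) + r (k + j) ≤ r k + r (k + j + 1))
    (k : ℕ) (W : Submodule K V) (hW : finrank K W = r k)
    (hWr : ∀ j, finrank K (W.map (N ^ j)) ≤ r (k + j)) (hWN : W.map N ≤ W) :
    ∃ G : Submodule K V, finrank K G = r (k + 1) ∧
      (∀ j, finrank K (G.map (N ^ j)) ≤ r (k + 1 + j)) ∧ G.map N ≤ G ∧ W.map N ≤ G ∧ G ≤ W := by
  let C : ℕ → Submodule K V := fun j => W.map N ⊔ (LinearMap.ker (N ^ j) ⊓ W)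
  have hC : Monotone C := monotone_nat_of_le_succ fun j =>
    sup_le_sup_left (inf_le_inf_right _ (by
      rw [pow_succ']; exact LinearMap.ker_le_ker_comp _ _)) _
  have hC0 : C 0 = W.map N := by
    simp [C, Module.End.one_eq_id]
  have hCm : C m = W := by
    simpa [C, hN] using hWN
  obtain ⟨G, hGd, hG0, hGm, hG⟩ := Submodule.exists_comparable_of_monotone C hC (m := m)
    (d := r (k + 1)) (by
      have := hWr 1
      rwa [hC0, ← pow_one N]) (by rw [hCm, hW]; exact hr (Nat.le_succ k))
  rw [hC0] at hG0
  rw [hCm] at hGm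
  refine ⟨G, hGd, fun j => ?_, (Submodule.map_mono hGm).trans hG0, hG0, hGm⟩
  rcases hG j with h | h
  · have hk : LinearMap.ker (N ^ j) ⊓ W ≤ LinearMap.ker (N ^ j) ⊓ G :=
      le_inf inf_le_left (le_sup_right.trans h)
    have h1 := Submodule.finrank_mono hk
    have h2 := Submodule.finrank_map_add_finrank_inf_ker (N ^ j) W
    have h3 := Submodule.finrank_map_add_finrank_inf_ker (N ^ j) G
    have h4 := hconv k j
    have h5 := hWr j
    rw [show k + 1 + j = k + j + 1 by omega]
    omega
  · have hle : G.map (N ^ j) ≤ W.map (N ^ (j + 1)) := by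
      refine (Submodule.map_mono h).trans ?_
      rw [Submodule.map_sup]
      refine sup_le ?_ ?_
      · rw [← Submodule.map_comp, pow_succ, Module.End.mul_eq_comp]
      · rintro _ ⟨x, hx, rfl⟩
        have : (N ^ j) x = 0 := hx.1
        rw [this]
        exact Submodule.zero_mem _
    rw [show k + 1 + j = k + (j + 1) by omega]
    exact (Submodule.finrank_mono hle).trans (hWr _)

/-- If the ranks of the powers of `N` are bounded by a convex sequence `r`, there is a descending
flag with dimensions `r k`, each member of which is sent by `N` into the next. -/
lemma LinearMap.exists_flag [FiniteDimensional K V] (N : End K V) {m : ℕ} (hN : N ^ m = 0)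
    {r : ℕ → ℕ} (hr : Antitone r) (hconv : ∀ k j, r (k + 1) + r (k + j) ≤ r k + r (k + j + 1))
    (h0 : r 0 = finrank K V) (hle : ∀ k, finrank K (LinearMap.range (N ^ k)) ≤ r k) :
    ∃ G : ℕ → Submodule K V, G 0 = ⊤ ∧ Antitone G ∧ (∀ k, finrank K (G k) = r k) ∧
      ∀ k, (G k).map N ≤ G (k + 1) := by
  let P : ℕ → Submodule K V → Prop := fun k W => finrank K W = r k ∧
    (∀ j, finrank K (W.map (N ^ j)) ≤ r (k + j)) ∧ W.map N ≤ W
  have hstep : ∀ k W, ∃ G : Submodule K V, P k W → P (k + 1) G ∧ W.map N ≤ G ∧ G ≤ W := by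
    intro k W
    by_cases h : P k W
    · obtain ⟨G, h1, h2, h3, h4, h5⟩ :=
        LinearMap.exists_flag_step N hN hr hconv k W h.1 h.2.1 h.2.2
      exact ⟨G, fun _ => ⟨⟨h1, h2, h3⟩, h4, h5⟩⟩
    · exact ⟨⊤, fun h' => absurd h' h⟩
  choose f hf using hstep
  let G : ℕ → Submodule K V := fun k => Nat.rec ⊤ f k
  have hP : ∀ k, P k (G k) := by
    intro k
    induction k with
    | zero =>
      refine ⟨by simp [G, h0], fun j => ?_, le_top⟩
      change finrank K ((⊤ : Submodule K V).map (N ^ j)) ≤ _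
      rw [Submodule.map_top, zero_add]
      exact hle j
    | succ k ih => exact (hf k _ ih).1
  exact ⟨G, rfl, antitone_nat_of_succ_le fun k => (hf k _ (hP k)).2.2, fun k => (hP k).1,
    fun k => (hf k _ (hP k)).2.1⟩

/-- A linear map sending each member of a finite flag `A` onto the corresponding member of a finite
flag `B`, when the graded pieces of `B` are no larger than those of `A`. -/
lemma LinearMap.exists_map_flag_eq [FiniteDimensional K V] [FiniteDimensional K V₂]
    (A : ℕ → Submodule K V) (B : ℕ → Submodule K V₂) (hA : Antitone A) (hB : Antitone B)
    (hAB : ∀ k, finrank K (B k) + finrank K (A (k + 1)) ≤ finrank K (A k) + finrank K (B (k + 1)))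
    {s : ℕ} (hs : B s = ⊥) :
    ∃ f : V →ₗ[K] V₂, ∀ k, (A k).map f = B k := by
  suffices h : ∀ i ≤ s, ∃ f : V →ₗ[K] V₂, ∀ k, s - i ≤ k → (A k).map f = B k by
    obtain ⟨f, hf⟩ := h s le_rfl
    exact ⟨f, fun k => hf k (by omega)⟩
  intro i
  induction i with
  | zero =>
    refine fun _ => ⟨0, fun k hk => ?_⟩
    rw [Submodule.map_zero, eq_comm, eq_bot_iff, ← hs]
    exact hB (by omega)
  | succ i ih =>
    intro hi
    obtain ⟨f, hf⟩ := ih (by omega)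
    obtain ⟨k, hk⟩ : ∃ k, k = s - (i + 1) := ⟨_, rfl⟩
    have hk1 : s - i = k + 1 := by omega
    rw [hk1] at hf
    obtain ⟨C, -, hCd, hCs⟩ := Submodule.exists_relCompl (hA (Nat.le_succ k))
    obtain ⟨D, -, hDd, hDs⟩ := Submodule.exists_relCompl (hB (Nat.le_succ k))
    have hdim : finrank K D ≤ finrank K C := by
      have a1 := Submodule.finrank_sup_of_disjoint hCd
      have a2 := Submodule.finrank_sup_of_disjoint hDd
      rw [hCs] at a1
      rw [hDs] at a2
      have := hAB k
      simp only [Nat.succ_eq_add_one] at a1 a2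
      omega
    obtain ⟨v, hv⟩ := finrank_le_iff_exists_linearMap.1 hdim
    obtain ⟨u, hu⟩ := LinearMap.exists_leftInverse_of_injective v (LinearMap.ker_eq_bot.2 hv)
    obtain ⟨F, hF1, hF2, -⟩ := Submodule.exists_extend_of_disjoint hCd
      (f ∘ₗ (A (k + 1)).subtype) (D.subtype ∘ₗ u)
    have hFA : ∀ j, k + 1 ≤ j → (A j).map F = B j := by
      intro j hj
      rw [← hf j hj]
      ext y
      simp only [Submodule.mem_map]
      exact exists_congr fun x => and_congr_right fun hx => by
        rw [show F x = f x from hF1 ⟨x, hA hj hx⟩]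
    have hFC : C.map F = D := by
      ext y
      constructor
      · rintro ⟨x, hx, rfl⟩
        rw [show F x = u ⟨x, hx⟩ from hF2 ⟨x, hx⟩]
        exact (u _).2
      · intro hy
        refine ⟨v ⟨y, hy⟩, (v _).2, ?_⟩
        rw [hF2]
        exact congrArg Subtype.val (LinearMap.congr_fun hu ⟨y, hy⟩)
    refine ⟨F, fun j hj => ?_⟩
    rcases Nat.lt_or_ge k j with h | h
    · exact hFA j h
    · obtain rfl : j = k := by omega
      rw [← hCs, Submodule.map_sup, hFA _ le_rfl, hFC, hDs]

end Nilpotent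

section Combinatorics

lemma Multiset.excess_second_difference (s : Multiset ℕ) (b : ℕ) :
    (s.map (· - b)).sum + (s.map (· - (b + 2))).sum
      = 2 * (s.map (· - (b + 1))).sum + s.count (b + 1) := by
  induction s using Multiset.induction_on with
  | empty => simp
  | cons a s ih =>
    simp only [Multiset.map_cons, Multiset.sum_cons, Multiset.count_cons]
    split_ifs <;> omega

/-- A partition is determined by the numbers `∑ (pᵢ - k)`. -/
lemma Nat.Partition.eq_of_excess_eq {n : ℕ} {p q : n.Partition}
    (h : ∀ k, (p.parts.map (· - k)).sum = (q.parts.map (· - k)).sum) : p = q := by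
  apply Nat.Partition.ext
  ext a
  rcases a with _ | b
  · rw [Multiset.count_eq_zero.2 fun h0 => (p.parts_pos h0).ne rfl,
      Multiset.count_eq_zero.2 fun h0 => (q.parts_pos h0).ne rfl]
  · have h1 := Multiset.excess_second_difference p.parts b
    have h2 := Multiset.excess_second_difference q.parts b
    rw [h, h, h] at h1
    omega

lemma sum_second_difference_mul (r : ℕ → ℕ) (hconv : ∀ k, 2 * r (k + 1) ≤ r k + r (k + 2))
    (m i : ℕ) :
    (r m : ℤ) = ((∑ k ∈ Finset.range (m + i),
      (r k + r (k + 2) - 2 * r (k + 1)) * (k + 1 - m) : ℕ) : ℤ)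
        + r (m + i) + i * ((r (m + i) : ℤ) - r (m + i + 1)) := by
  induction i with
  | zero =>
    rw [Finset.sum_eq_zero]
    · simp
    · intro k hk
      rw [Finset.mem_range] at hk
      rw [show k + 1 - m = 0 by omega, mul_zero]
  | succ i ih =>
    rw [ih, ← add_assoc m i 1, Finset.sum_range_succ]
    have hc := hconv (m + i)
    rw [show m + i + 1 - m = i + 1 by omega]
    push_cast [Nat.cast_sub hc]
    ring

/-- Every convex sequence starting at `n` and vanishing from `n` on comes from a partition. -/
lemma Nat.Partition.exists_excess_eq {n : ℕ} (r : ℕ → ℕ) (h0 : r 0 = n)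
    (hn : ∀ k, n ≤ k → r k = 0) (hconv : ∀ k, 2 * r (k + 1) ≤ r k + r (k + 2)) :
    ∃ p : n.Partition, ∀ k, (p.parts.map (· - k)).sum = r k := by
  let s : Multiset ℕ := ∑ k ∈ Finset.range n,
    Multiset.replicate (r k + r (k + 2) - 2 * r (k + 1)) (k + 1)
  have hs : ∀ m, (s.map (· - m)).sum = r m := by
    intro m
    have h1 : (s.map (· - m)).sum =
        ∑ k ∈ Finset.range n, (r k + r (k + 2) - 2 * r (k + 1)) * (k + 1 - m) := by
      rw [← Multiset.coe_mapAddMonoidHom, ← Multiset.coe_sumAddMonoidHom, map_sum, map_sum]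
      simp
    rw [h1]
    rcases le_or_gt m n with hm | hm
    · obtain ⟨i, rfl⟩ := Nat.exists_eq_add_of_le hm
      have := sum_second_difference_mul r hconv m i
      rw [hn _ le_rfl, hn _ (Nat.le_succ _)] at this
      simp only [Nat.cast_zero, sub_zero, mul_zero, add_zero] at this
      exact_mod_cast this.symm
    · rw [hn m hm.le]
      refine Finset.sum_eq_zero fun k hk => ?_
      rw [Finset.mem_range] at hk
      rw [show k + 1 - m = 0 by omega, mul_zero]
  refine ⟨⟨s, fun {i} hi => ?_, ?_⟩, hs⟩
  · obtain ⟨k, -, hk⟩ := Multiset.mem_sum.1 hi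
    rw [Multiset.eq_of_mem_replicate hk]
    exact Nat.succ_pos k
  · simpa [h0] using hs 0

lemma List.sum_take_le_excess (l : List ℕ) (k m : ℕ) :
    (l.take m).sum ≤ m * k + (l.map (· - k)).sum := by
  induction l generalizing m with
  | nil => simp
  | cons a l ih =>
    rcases m with _ | m
    · simp
    · have := ih m
      simp only [List.take_succ_cons, List.sum_cons, List.map_cons, Nat.succ_mul]
      omega

lemma List.excess_eq_zero {l : List ℕ} {k : ℕ} (h : ∀ b ∈ l, b ≤ k) :
    (l.map (· - k)).sum = 0 := by
  rw [List.sum_eq_zero]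
  intro x hx
  obtain ⟨b, hb, rfl⟩ := List.mem_map.1 hx
  exact Nat.sub_eq_zero_of_le (h b hb)

lemma List.exists_take_sum_eq {l : List ℕ} (hl : l.Pairwise (· ≥ ·)) (k : ℕ) :
    ∃ m, (l.take m).sum = m * k + (l.map (· - k)).sum := by
  induction l with
  | nil => exact ⟨0, by simp⟩
  | cons a l ih =>
    rw [List.pairwise_cons] at hl
    rcases le_or_gt a k with h | h
    · refine ⟨0, ?_⟩
      rw [List.excess_eq_zero]
      · simp
      · intro b hb
        rcases List.mem_cons.1 hb with rfl | hb
        · exact h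
        · exact (hl.1 b hb).trans h
    · obtain ⟨m, hm⟩ := ih hl.2
      refine ⟨m + 1, ?_⟩
      simp only [List.take_succ_cons, List.sum_cons, List.map_cons, Nat.succ_mul]
      omega

lemma List.exists_excess_eq {l : List ℕ} (hl : l.Pairwise (· ≥ ·)) (m : ℕ) :
    ∃ k, (k = 0 ∨ k ∈ l) ∧ (l.take m).sum = m * k + (l.map (· - k)).sum := by
  induction l generalizing m with
  | nil => exact ⟨0, by simp⟩
  | cons a l ih =>
    rw [List.pairwise_cons] at hl
    rcases m with _ | m
    · refine ⟨a, by simp, ?_⟩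
      rw [List.excess_eq_zero]
      · simp
      · intro b hb
        rcases List.mem_cons.1 hb with rfl | hb
        · exact le_rfl
        · exact hl.1 b hb
    · obtain ⟨k, hk, hm⟩ := ih hl.2 m
      have hka : k ≤ a := by
        rcases hk with rfl | hk
        · exact Nat.zero_le _
        · exact hl.1 k hk
      refine ⟨k, hk.imp_right (List.mem_cons_of_mem _), ?_⟩
      simp only [List.take_succ_cons, List.sum_cons, List.map_cons, Nat.succ_mul]
      omega

lemma Nat.Partition.sum_map_sort_reverse {n : ℕ} (p : n.Partition) (k : ℕ) :
    ((p.parts.sort (· ≤ ·)).reverse.map (· - k)).sum = (p.parts.map (· - k)).sum := by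
  rw [List.map_reverse, List.sum_reverse]
  conv_rhs => rw [← Multiset.sort_eq p.parts (· ≤ ·)]
  rfl

lemma dominatedBy_iff {n : ℕ} {p q : n.Partition} :
    DominatedBy p q ↔ ∀ k, (p.parts.map (· - k)).sum ≤ (q.parts.map (· - k)).sum := by
  have hsort : ∀ p : n.Partition, (p.parts.sort (· ≤ ·)).reverse.Pairwise (· ≥ ·) :=
    fun p => List.pairwise_reverse.2 (Multiset.pairwise_sort _ _)
  constructor
  · intro h k
    obtain ⟨m, hm⟩ := List.exists_take_sum_eq (hsort p) k
    have h1 := h m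
    have h2 := List.sum_take_le_excess (q.parts.sort (· ≤ ·)).reverse k m
    rw [Nat.Partition.sum_map_sort_reverse] at hm h2
    omega
  · intro h m
    obtain ⟨k, -, hk⟩ := List.exists_excess_eq (hsort q) m
    have h1 := h k
    have h2 := List.sum_take_le_excess (p.parts.sort (· ≤ ·)).reverse k m
    rw [Nat.Partition.sum_map_sort_reverse] at hk h2
    omega

end Combinatorics

section JordanRank

lemma mem_partialSums_cons {a m : ℕ} {l : List ℕ} :
    m ∈ partialSums (a :: l) ↔ m = a ∨ ∃ b ∈ partialSums l, m = a + b := by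
  simp only [partialSums, List.length_cons, List.mem_map, List.mem_range]
  constructor
  · rintro ⟨k, hk, rfl⟩
    rcases k with _ | k
    · exact Or.inl (by simp)
    · exact Or.inr ⟨_, ⟨k, by omega, rfl⟩, by simp⟩
  · rintro (rfl | ⟨b, ⟨k, hk, rfl⟩, rfl⟩)
    · exact ⟨0, by omega, by simp⟩
    · exact ⟨k + 1, by omega, by simp⟩

/-- The number of columns `j` for which no block boundary separates `j - k` from `j`. -/
lemma card_filter_notMem_partialSums (l : List ℕ) (k : ℕ) :
    ((Finset.range l.sum).filter fun j =>
      k ≤ j ∧ ∀ m ∈ partialSums l, ¬(j - k < m ∧ m ≤ j)).card = (l.map (· - k)).sum := by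
  induction l with
  | nil => simp
  | cons a l ih =>
    rw [List.map_cons, List.sum_cons, List.sum_cons, ← ih, Finset.card_filter,
      Finset.sum_range_add, Finset.card_filter]
    congr 1
    · rw [← Finset.card_filter, ← Nat.card_Ico k a]
      congr 1
      ext j
      simp only [Finset.mem_filter, Finset.mem_range, Finset.mem_Ico, mem_partialSums_cons]
      constructor
      · rintro ⟨h1, h2, -⟩
        exact ⟨h2, h1⟩
      · rintro ⟨h1, h2⟩
        refine ⟨h2, h1, ?_⟩
        rintro m (rfl | ⟨b, -, rfl⟩) <;> omega
    · refine Finset.sum_congr rfl fun j _ => ?_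
      congr 1
      simp only [mem_partialSums_cons, eq_iff_iff]
      constructor
      · rintro ⟨h1, h2⟩
        have ha := h2 a (Or.inl rfl)
        refine ⟨by omega, fun m hm hm' => h2 (a + m) (Or.inr ⟨m, hm, rfl⟩) (by omega)⟩
      · rintro ⟨h1, h2⟩
        refine ⟨by omega, ?_⟩
        rintro m (rfl | ⟨b, hb, rfl⟩)
        · omega
        · have := h2 b hb
          omega

variable {K : Type*} [Field K] {n : ℕ}

lemma jordanOf_sub_pow_apply (z : K) (mu : n.Partition) (k : ℕ) (i j : Fin n) :
    ((jordanOf z mu - z • (1 : Matrix (Fin n) (Fin n) K)) ^ k) i j =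
      if (j : ℕ) = i + k ∧ ∀ m ∈ partialSums ((mu.parts.sort (· ≤ ·)).reverse),
        ¬((i : ℕ) < m ∧ m ≤ j) then 1 else 0 := by
  set S := partialSums ((mu.parts.sort (· ≤ ·)).reverse) with hS
  have hN : ∀ i j : Fin n, (jordanOf z mu - z • (1 : Matrix (Fin n) (Fin n) K)) i j =
      if (j : ℕ) = i + 1 ∧ (i : ℕ) + 1 ∉ S then 1 else 0 := by
    intro i j
    by_cases hij : i = j
    · subst hij
      simp [jordanOf]
    · have : (i : ℕ) ≠ j := fun h => hij (Fin.ext h)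
      simp [jordanOf, hij, this, hS]
  induction k generalizing j with
  | zero =>
    rw [pow_zero, Matrix.one_apply]
    refine if_congr ?_ rfl rfl
    rw [Fin.ext_iff]
    constructor
    · intro h
      exact ⟨by omega, fun m _ => by omega⟩
    · rintro ⟨h, -⟩
      omega
  | succ k ih =>
    rw [pow_succ, Matrix.mul_apply]
    simp only [ih, hN]
    by_cases hj : (j : ℕ) = i + (k + 1)
    · rw [Finset.sum_eq_single (⟨i + k, by omega⟩ : Fin n)]
      · rw [ite_zero_mul_ite_zero, mul_one]
        refine if_congr ?_ rfl rfl
        simp only [true_and, hj]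
        constructor
        · rintro ⟨h1, -, h2⟩
          intro m hm hm'
          rcases Nat.lt_or_ge (i + k) m with h | h
          · exact h2 (by rwa [show (i : ℕ) + k + 1 = m by omega])
          · exact h1 m hm ⟨hm'.1, h⟩
        · intro h
          exact ⟨fun m hm hm' => h m hm ⟨hm'.1, by omega⟩, by omega,
            fun hm => h _ hm ⟨by omega, by omega⟩⟩
      · intro b _ hb
        have : (b : ℕ) ≠ i + k := fun h => hb (Fin.ext h)
        simp [this]
      · simp
    · rw [if_neg fun h => hj h.1, Finset.sum_eq_zero]
      intro b _
      by_cases hb : (b : ℕ) = i + k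
      · rw [if_neg (c := (j : ℕ) = b + 1 ∧ _) (by omega), mul_zero]
      · rw [if_neg (c := (b : ℕ) = i + k ∧ _) (fun h => hb h.1), zero_mul]

lemma rank_jordanOf_sub_pow (z : K) (mu : n.Partition) (k : ℕ) :
    ((jordanOf z mu - z • (1 : Matrix (Fin n) (Fin n) K)) ^ k).rank =
      (mu.parts.map (· - k)).sum := by
  classical
  set S := partialSums ((mu.parts.sort (· ≤ ·)).reverse) with hS
  let good : ℕ → Prop := fun j => k ≤ j ∧ ∀ m ∈ S, ¬(j - k < m ∧ m ≤ j)
  let v : {j : Fin n // good j} → Fin n → K :=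
    fun j => Pi.basisFun K (Fin n) ⟨j.1 - k, by omega⟩
  have hv : LinearIndependent K v :=
    (Pi.basisFun K (Fin n)).linearIndependent.comp
      (fun j : {j : Fin n // good j} => (⟨j.1 - k, by omega⟩ : Fin n)) (by
        intro a b hab
        have h1 := a.2.1
        have h2 := b.2.1
        have h3 := congrArg Fin.val hab
        simp only at h3
        exact Subtype.ext (Fin.ext (by omega)))
  have hcol : ∀ (j : Fin n) (hj : good j),
      ((jordanOf z mu - z • (1 : Matrix (Fin n) (Fin n) K)) ^ k).col j = v ⟨j, hj⟩ := by
    intro j hj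
    ext i
    have hj' := hj
    obtain ⟨h1, h2⟩ := hj'
    rw [Matrix.col_apply, jordanOf_sub_pow_apply, ← hS]
    simp only [v, Pi.basisFun_apply, Pi.single_apply]
    refine if_congr ?_ rfl rfl
    rw [Fin.ext_iff]
    constructor
    · rintro ⟨h, -⟩
      simp only
      omega
    · intro h
      simp only at h
      rw [h]
      exact ⟨by omega, h2⟩
  have hcol0 : ∀ j : Fin n, ¬good j →
      ((jordanOf z mu - z • (1 : Matrix (Fin n) (Fin n) K)) ^ k).col j = 0 := by
    intro j hj
    ext i
    rw [Matrix.col_apply, jordanOf_sub_pow_apply, ← hS]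
    refine if_neg fun h => hj ⟨by omega, ?_⟩
    rw [show (j : ℕ) - k = i by omega]
    exact h.2
  have hspan : Submodule.span K
      (Set.range ((jordanOf z mu - z • (1 : Matrix (Fin n) (Fin n) K)) ^ k).col) =
        Submodule.span K (Set.range v) := by
    apply le_antisymm
    · rw [Submodule.span_le]
      rintro _ ⟨j, rfl⟩
      by_cases hj : good j
      · rw [hcol j hj]
        exact Submodule.subset_span ⟨_, rfl⟩
      · rw [hcol0 j hj]
        exact Submodule.zero_mem _
    · apply Submodule.span_mono
      rintro _ ⟨j, rfl⟩
      exact ⟨j, hcol j j.2⟩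
  rw [Matrix.rank_eq_finrank_span_cols, hspan, finrank_span_eq_card hv,
    ← Nat.Partition.sum_map_sort_reverse, ← card_filter_notMem_partialSums, Fintype.card_subtype,
    ← Finset.card_map Fin.valEmbedding]
  congr 1
  ext j
  have hsum : (mu.parts.sort (· ≤ ·)).reverse.sum = n := by
    have := Nat.Partition.sum_map_sort_reverse mu 0
    simpa [mu.parts_sum] using this
  simp only [Finset.mem_map, Finset.mem_filter, Finset.mem_univ, true_and, Finset.mem_range, hsum]
  constructor
  · rintro ⟨i, hi, rfl⟩
    exact ⟨i.2, hi⟩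
  · rintro ⟨h1, h2⟩
    exact ⟨⟨j, h1⟩, h2, rfl⟩

end JordanRank

section Orbits

open Module

variable {K : Type*} [Field K] {n : ℕ}

lemma Matrix.rank_pow_eq_finrank_range (A : Matrix (Fin n) (Fin n) K) (k : ℕ) :
    (A ^ k).rank = finrank K (LinearMap.range ((Matrix.toLinAlgEquiv' A : End K _) ^ k)) := by
  rw [← map_pow]
  rfl

lemma Matrix.eq_zero_of_rank_eq_zero {A : Matrix (Fin n) (Fin n) K} (h : A.rank = 0) : A = 0 := by
  apply Matrix.toLin'.injective
  rw [map_zero]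
  exact LinearMap.range_eq_bot.1 (Submodule.finrank_eq_zero.1 h)

/-- A matrix of rank `r` has an identity matrix of size `r` as a two-sided compression. -/
lemma Matrix.exists_mul_mul_eq_one (A : Matrix (Fin n) (Fin n) K) :
    ∃ (P : Matrix (Fin A.rank) (Fin n) K) (Q : Matrix (Fin n) (Fin A.rank) K), P * A * Q = 1 := by
  let f : (Fin n → K) →ₗ[K] (Fin n → K) := A.mulVecLin
  let e : LinearMap.range f ≃ₗ[K] (Fin A.rank → K) :=
    LinearEquiv.ofFinrankEq _ _ (by rw [finrank_fin_fun]; rfl)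
  obtain ⟨q, hq⟩ := LinearMap.exists_rightInverse_of_surjective f.rangeRestrict f.range_rangeRestrict
  obtain ⟨p, hp⟩ := LinearMap.exists_extend e.toLinearMap
  refine ⟨LinearMap.toMatrix' p, LinearMap.toMatrix' (q ∘ₗ e.symm.toLinearMap), ?_⟩
  have hA : LinearMap.toMatrix' f = A := LinearMap.toMatrix'_toLin' A
  have hcomp : LinearMap.toMatrix' p * A * LinearMap.toMatrix' (q ∘ₗ e.symm.toLinearMap) =
      LinearMap.toMatrix' ((p ∘ₗ f) ∘ₗ (q ∘ₗ e.symm.toLinearMap)) := by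
    rw [LinearMap.toMatrix'_comp, LinearMap.toMatrix'_comp, hA]
  rw [hcomp, ← LinearMap.toMatrix'_id]
  congr 1
  refine LinearMap.ext fun x => ?_
  have h1 : f.rangeRestrict (q (e.symm x)) = e.symm x := LinearMap.congr_fun hq _
  have h2 : p (e.symm x : Fin n → K) = x := by
    have := LinearMap.congr_fun hp (e.symm x)
    simpa using this
  have h3 : f (q (e.symm x)) = e.symm x := congrArg Subtype.val h1
  simp [h3, h2]

lemma Matrix.le_rank_of_det_ne_zero {r : ℕ} (A : Matrix (Fin n) (Fin n) K)
    (P : Matrix (Fin r) (Fin n) K) (Q : Matrix (Fin n) (Fin r) K) (h : (P * A * Q).det ≠ 0) :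
    r ≤ A.rank := by
  have h1 := Matrix.rank_of_isUnit _ ((Matrix.isUnit_iff_isUnit_det _).2 h.isUnit)
  rw [Fintype.card_fin] at h1
  rw [← h1]
  exact (Matrix.rank_mul_le_left _ _).trans (Matrix.rank_mul_le_right _ _)

lemma Matrix.pow_card_eq_zero_of_isNilpotent {N : Matrix (Fin n) (Fin n) K} (h : IsNilpotent N) :
    N ^ n = 0 := by
  have h1 := (Matrix.isNilpotent_charpoly_sub_pow_of_isNilpotent h).eq_zero
  have h2 := Matrix.aeval_self_charpoly N
  rw [sub_eq_zero.1 h1] at h2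
  simpa using h2

lemma conj_sub_smul_one_pow (g : (Matrix (Fin n) (Fin n) K)ˣ) (A : Matrix (Fin n) (Fin n) K)
    (z : K) (k : ℕ) :
    ((g : Matrix (Fin n) (Fin n) K) * A * (g⁻¹ : (Matrix (Fin n) (Fin n) K)ˣ) - z • 1) ^ k =
      g * (A - z • 1) ^ k * (g⁻¹ : (Matrix (Fin n) (Fin n) K)ˣ) := by
  rw [← Units.conj_pow]
  congr 1
  rw [mul_sub, sub_mul, mul_smul_comm, smul_mul_assoc, mul_one, Units.mul_inv]

/-- Two matrices with a single common eigenvalue are conjugate iff the powers of their nilpotent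
parts have the same ranks. -/
lemma mem_adjOrbit_iff_rank {A B : Matrix (Fin n) (Fin n) K} {z : K}
    (hA : IsNilpotent (A - z • 1)) :
    B ∈ adjOrbit A ↔
      IsNilpotent (B - z • 1) ∧ ∀ k, ((B - z • 1) ^ k).rank = ((A - z • 1) ^ k).rank := by
  constructor
  · rintro ⟨g, rfl⟩
    constructor
    · obtain ⟨m, hm⟩ := hA
      exact ⟨m, by rw [conj_sub_smul_one_pow, hm, mul_zero, zero_mul]⟩
    · intro k
      rw [conj_sub_smul_one_pow,
        Matrix.rank_mul_eq_left_of_isUnit_det _ _ ((Matrix.isUnit_iff_isUnit_det _).1 g⁻¹.isUnit),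
        Matrix.rank_mul_eq_right_of_isUnit_det _ _ ((Matrix.isUnit_iff_isUnit_det _).1 g.isUnit)]
  · rintro ⟨hB, hr⟩
    obtain ⟨m, hm⟩ := hA
    obtain ⟨E, hE⟩ := LinearMap.exists_intertwining_of_finrank_range_pow_eq m _ _
      (Matrix.toLinAlgEquiv' (A - z • 1) : End K _) (Matrix.toLinAlgEquiv' (B - z • 1) : End K _)
      (by rw [← map_pow, hm, map_zero]) (fun k => by
        rw [← Matrix.rank_pow_eq_finrank_range, ← Matrix.rank_pow_eq_finrank_range, hr])
    have h1 : LinearMap.toMatrix' E.toLinearMap * LinearMap.toMatrix' E.symm.toLinearMap = 1 := by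
      rw [← LinearMap.toMatrix'_comp, ← LinearMap.toMatrix'_id]
      simp
    have h2 : LinearMap.toMatrix' E.symm.toLinearMap * LinearMap.toMatrix' E.toLinearMap = 1 := by
      rw [← LinearMap.toMatrix'_comp, ← LinearMap.toMatrix'_id]
      simp
    let g : (Matrix (Fin n) (Fin n) K)ˣ := ⟨_, _, h1, h2⟩
    have h3 : (g : Matrix (Fin n) (Fin n) K) * (A - z • 1) = (B - z • 1) * g := by
      apply Matrix.toLin'.injective
      rw [Matrix.toLin'_mul, Matrix.toLin'_mul]
      refine LinearMap.ext fun x => ?_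
      simp only [g, LinearMap.comp_apply, Matrix.toLin'_toMatrix']
      exact hE x
    have h4 : (g : Matrix (Fin n) (Fin n) K) * A = B * g := by
      rw [mul_sub, sub_mul, mul_smul_comm, smul_mul_assoc, mul_one, one_mul] at h3
      exact sub_left_injective h3
    exact ⟨g, by rw [h4, mul_assoc, Units.mul_inv, mul_one]⟩

lemma isNilpotent_jordanOf_sub (z : K) (mu : n.Partition) :
    IsNilpotent (jordanOf z mu - z • (1 : Matrix (Fin n) (Fin n) K)) := by
  refine ⟨n, ?_⟩
  ext i j
  rw [jordanOf_sub_pow_apply, if_neg (by omega), Matrix.zero_apply]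

/-- Jordan normal form for a matrix with a single eigenvalue. -/
lemma exists_mem_adjOrbit_jordanOf {X : Matrix (Fin n) (Fin n) K} {z : K}
    (hX : IsNilpotent (X - z • 1)) : ∃ rho : n.Partition, X ∈ adjOrbit (jordanOf z rho) := by
  obtain ⟨p, hp⟩ := Nat.Partition.exists_excess_eq (n := n) (fun k => ((X - z • 1) ^ k).rank)
    (by simp) (fun k hk => by
      simp [pow_eq_zero_of_le hk (Matrix.pow_card_eq_zero_of_isNilpotent hX)])
    (fun k => by
      simp only [Matrix.rank_pow_eq_finrank_range]
      exact LinearMap.finrank_range_pow_convex _ k)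
  refine ⟨p, (mem_adjOrbit_iff_rank (isNilpotent_jordanOf_sub z p)).2 ⟨hX, fun k => ?_⟩⟩
  rw [rank_jordanOf_sub_pow, hp]

end Orbits

section Closure

open Module Polynomial

variable {K : Type*} [Field K] {n : ℕ}

lemma exists_mvPolynomial_eval_eq_det {r : ℕ} (P : Matrix (Fin r) (Fin n) K)
    (Q : Matrix (Fin n) (Fin r) K) (z : K) (k : ℕ) :
    ∃ f : MvPolynomial (Fin n × Fin n) K, ∀ A : Matrix (Fin n) (Fin n) K,
      MvPolynomial.eval (fun p => A p.1 p.2) f = (P * (A - z • 1) ^ k * Q).det := by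
  let Z : Matrix (Fin n) (Fin n) (MvPolynomial (Fin n × Fin n) K) :=
    Matrix.of (fun i j => MvPolynomial.X (i, j)) - Matrix.scalar (Fin n) (MvPolynomial.C z)
  let P' : Matrix (Fin r) (Fin n) (MvPolynomial (Fin n × Fin n) K) := P.map MvPolynomial.C
  let Q' : Matrix (Fin n) (Fin r) (MvPolynomial (Fin n × Fin n) K) := Q.map MvPolynomial.C
  refine ⟨(P' * Z ^ k * Q').det, fun A => ?_⟩
  rw [RingHom.map_det, RingHom.mapMatrix_apply, Matrix.map_mul, Matrix.map_mul,
    ← RingHom.mapMatrix_apply (M := _ ^ k), map_pow]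
  congr 3
  · ext; simp [P']
  · congr 1
    ext i j
    by_cases h : i = j <;> simp [Z, h]
  · ext; simp [Q']

lemma rank_le_of_mem_zariskiClosure {S : Set (Matrix (Fin n) (Fin n) K)}
    {X : Matrix (Fin n) (Fin n) K} (hX : X ∈ zariskiClosure S) (z : K) (k r : ℕ)
    (hr : ∀ A ∈ S, ((A - z • (1 : Matrix (Fin n) (Fin n) K)) ^ k).rank ≤ r) :
    ((X - z • (1 : Matrix (Fin n) (Fin n) K)) ^ k).rank ≤ r := by
  by_contra! hlt
  obtain ⟨P, Q, hPQ⟩ := Matrix.exists_mul_mul_eq_one ((X - z • 1) ^ k)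
  obtain ⟨f, hf⟩ := exists_mvPolynomial_eval_eq_det P Q z k
  have h := hX f fun A hA => by
    rw [hf]
    by_contra hne
    exact absurd (Matrix.le_rank_of_det_ne_zero _ _ _ hne) (not_le.2 ((hr A hA).trans_lt hlt))
  rw [hf, hPQ, Matrix.det_one] at h
  exact one_ne_zero h

/-- If `X + t (Y - X)` lies in `S` for all `t` outside the roots of some nonzero polynomial, then
`X` lies in the Zariski closure of `S`. -/
lemma mem_zariskiClosure_of_line [Infinite K] {S : Set (Matrix (Fin n) (Fin n) K)}
    (X Y : Matrix (Fin n) (Fin n) K) (p : K[X]) (hp : p ≠ 0)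
    (h : ∀ t : K, p.eval t ≠ 0 → X + t • (Y - X) ∈ S) : X ∈ zariskiClosure S := by
  intro f hf
  let q : K[X] := MvPolynomial.aeval
    (fun i : Fin n × Fin n => C (X i.1 i.2) + Polynomial.X * C ((Y - X) i.1 i.2)) f
  have hq : ∀ t, q.eval t = MvPolynomial.eval (fun i => (X + t • (Y - X)) i.1 i.2) f := by
    intro t
    rw [← Polynomial.coe_aeval_eq_eval, ← MvPolynomial.aeval_eq_eval]
    simp only [q]
    rw [← AlgHom.comp_apply, MvPolynomial.comp_aeval]
    congr 2
    ext i
    simp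
  have hpq : p * q = 0 := by
    apply Polynomial.funext
    intro t
    rw [eval_mul, eval_zero, mul_eq_zero, or_iff_not_imp_left]
    exact fun ht => (hq t).trans (hf _ (h t ht))
  have hq0 : q = 0 := (mul_eq_zero.1 hpq).resolve_left hp
  have h0 := hq 0
  rw [hq0] at h0
  simpa using h0.symm

lemma exists_polynomial_rank_le (A B : Matrix (Fin n) (Fin n) K) (k : ℕ) :
    ∃ p : K[X], p.eval 1 ≠ 0 ∧
      ∀ t, p.eval t ≠ 0 → ((A + B) ^ k).rank ≤ ((A + t • B) ^ k).rank := by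
  obtain ⟨P, Q, hPQ⟩ := Matrix.exists_mul_mul_eq_one ((A + B) ^ k)
  let p : K[X] := (P.map C * (A.map C + (Polynomial.X : K[X]) • B.map C) ^ k * Q.map C).det
  have hp : ∀ t, p.eval t = (P * (A + t • B) ^ k * Q).det := by
    intro t
    simp only [p]
    rw [← Polynomial.coe_evalRingHom, RingHom.map_det, RingHom.mapMatrix_apply, Matrix.map_mul,
      Matrix.map_mul, ← RingHom.mapMatrix_apply (M := _ ^ k), map_pow]
    congr 3
    · ext; simp
    · congr 1
      ext i j
      simp [mul_comm t]
    · ext; simp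
  refine ⟨p, ?_, fun t ht => Matrix.le_rank_of_det_ne_zero _ P Q (by rwa [← hp])⟩
  rw [hp, one_smul, hPQ, Matrix.det_one]
  exact one_ne_zero

lemma range_pow_le_flag {V : Type*} [AddCommGroup V] [Module K V] {N : End K V}
    {G : ℕ → Submodule K V} (h : ∀ k, (G k).map N ≤ G (k + 1)) (h0 : G 0 = ⊤) (k : ℕ) :
    LinearMap.range (N ^ k) ≤ G k := by
  induction k with
  | zero => rw [h0]; exact le_top
  | succ k ih =>
    rw [LinearMap.range_pow_succ]
    exact (Submodule.map_mono ih).trans (h k)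

lemma range_pow_eq_flag {V : Type*} [AddCommGroup V] [Module K V] {N : End K V}
    {G : ℕ → Submodule K V} (h : ∀ k, (G k).map N = G (k + 1)) (h0 : G 0 = ⊤) (k : ℕ) :
    LinearMap.range (N ^ k) = G k := by
  induction k with
  | zero => rw [h0, pow_zero, Module.End.one_eq_id, LinearMap.range_id]
  | succ k ih => rw [LinearMap.range_pow_succ, ih, h k]

/-- Degeneration: the rank inequalities suffice for membership in the orbit closure. -/
lemma mem_zariskiClosure_of_rank_le [Infinite K] {A X : Matrix (Fin n) (Fin n) K} {z : K}
    (hA : IsNilpotent (A - z • 1)) (hX : IsNilpotent (X - z • 1))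
    (hr : ∀ k, ((X - z • 1) ^ k).rank ≤ ((A - z • 1) ^ k).rank) :
    X ∈ zariskiClosure (adjOrbit A) := by
  have hAn := Matrix.pow_card_eq_zero_of_isNilpotent hA
  have hXn := Matrix.pow_card_eq_zero_of_isNilpotent hX
  set r : ℕ → ℕ := fun k => ((A - z • 1) ^ k).rank
  have hconv1 : ∀ k, 2 * r (k + 1) ≤ r k + r (k + 2) := fun k => by
    simp only [r, Matrix.rank_pow_eq_finrank_range]
    exact LinearMap.finrank_range_pow_convex _ k
  have hconv : ∀ k j, r (k + 1) + r (k + j) ≤ r k + r (k + j + 1) := by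
    intro k j
    induction j with
    | zero => rw [add_zero, add_comm]
    | succ j ih =>
      have := hconv1 (k + j)
      rw [show k + (j + 1) = k + j + 1 by omega, show k + j + 1 + 1 = k + j + 2 by omega]
      omega
  have hanti : Antitone r := by
    simp only [r, Matrix.rank_pow_eq_finrank_range]
    exact LinearMap.finrank_range_pow_antitone _
  have hrn : r n = 0 := by simp [r, hAn]
  obtain ⟨G, hG0, hGa, hGd, hGX⟩ := LinearMap.exists_flag
    (Matrix.toLinAlgEquiv' (X - z • 1) : End K (Fin n → K)) (m := n)
    (by rw [← map_pow, hXn, map_zero]) hanti hconv (by simp [r])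
    (fun k => by rw [← Matrix.rank_pow_eq_finrank_range]; exact hr k)
  have hGn : G n = ⊥ := by rw [← Submodule.finrank_eq_zero, hGd, hrn]
  obtain ⟨y, hy⟩ := LinearMap.exists_map_flag_eq G (fun k => G (k + 1)) hGa
    (fun a b h => hGa (Nat.succ_le_succ h)) (fun k => by
      rw [hGd, hGd, hGd]
      have := hconv1 k
      rw [show k + 1 + 1 = k + 2 from rfl]
      omega) (s := n) (eq_bot_iff.2 (hGn ▸ hGa (Nat.le_succ n)))
  let Y₀ : Matrix (Fin n) (Fin n) K := Matrix.toLinAlgEquiv'.symm (y : End K (Fin n → K))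
  let B := Y₀ - (X - z • 1)
  have hsum : X - z • 1 + B = Y₀ := by simp [B]
  have hY : ∀ k, (Y₀ ^ k).rank = r k := by
    intro k
    rw [Matrix.rank_pow_eq_finrank_range, AlgEquiv.apply_symm_apply, range_pow_eq_flag hy hG0, hGd]
  have hBG : ∀ (t : K) (k : ℕ), (G k).map
      (Matrix.toLinAlgEquiv' (X - z • 1 + t • B) : End K (Fin n → K)) ≤ G (k + 1) := by
    rintro t k _ ⟨x, hx, rfl⟩
    have h1 : Matrix.toLinAlgEquiv' (X - z • 1) x ∈ G (k + 1) := hGX k ⟨x, hx, rfl⟩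
    have h2 : y x ∈ G (k + 1) := by
      rw [← hy k]
      exact ⟨x, hx, rfl⟩
    have h3 : Matrix.toLinAlgEquiv' B = y - Matrix.toLinAlgEquiv' (X - z • 1) := by
      rw [map_sub, AlgEquiv.apply_symm_apply]
    rw [map_add, map_smul, h3]
    exact (G (k + 1)).add_mem h1 ((G (k + 1)).smul_mem _ ((G (k + 1)).sub_mem h2 h1))
  choose p hp1 hp using fun k => exists_polynomial_rank_le (X - z • 1) B k
  refine mem_zariskiClosure_of_line X (X + B) (∏ k ∈ Finset.range n, p k) ?_ fun t ht => ?_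
  · intro h0
    have := congrArg (Polynomial.eval 1) h0
    rw [Polynomial.eval_prod, Polynomial.eval_zero, Finset.prod_eq_zero_iff] at this
    obtain ⟨k, -, hk⟩ := this
    exact hp1 k hk
  · rw [add_sub_cancel_left, mem_adjOrbit_iff_rank hA]
    have hle : ∀ k, ((X + t • B - z • 1) ^ k).rank ≤ r k := by
      intro k
      rw [add_sub_right_comm, Matrix.rank_pow_eq_finrank_range, ← hGd k]
      exact Submodule.finrank_mono (range_pow_le_flag (hBG t) hG0 k)
    refine ⟨⟨n, ?_⟩, fun k => le_antisymm (hle k) ?_⟩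
    · exact Matrix.eq_zero_of_rank_eq_zero (Nat.le_zero.1 (hrn ▸ hle n))
    · rcases Nat.lt_or_ge k n with hk | hk
      · rw [add_sub_right_comm]
        change r k ≤ _
        rw [← hY k, ← hsum]
        rw [Polynomial.eval_prod, Finset.prod_ne_zero_iff] at ht
        exact hp k t (ht k (Finset.mem_range.2 hk))
      · rw [pow_eq_zero_of_le hk hAn, Matrix.rank_zero]
        exact Nat.zero_le _

/-- The closure of the orbit of a Jordan matrix is described by ranks of powers. -/
lemma mem_zariskiClosure_adjOrbit_iff [Infinite K] {A X : Matrix (Fin n) (Fin n) K} {z : K}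
    (hA : IsNilpotent (A - z • 1)) :
    X ∈ zariskiClosure (adjOrbit A) ↔ IsNilpotent (X - z • 1) ∧
      ∀ k, ((X - z • 1) ^ k).rank ≤ ((A - z • 1) ^ k).rank := by
  refine ⟨fun h => ?_, fun h => mem_zariskiClosure_of_rank_le hA h.1 h.2⟩
  have hle : ∀ k, ((X - z • 1) ^ k).rank ≤ ((A - z • 1) ^ k).rank := fun k =>
    rank_le_of_mem_zariskiClosure h z k _ fun B hB =>
      (((mem_adjOrbit_iff_rank hA).1 hB).2 k).le
  obtain ⟨m, hm⟩ := hA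
  refine ⟨⟨m, ?_⟩, hle⟩
  have := hle m
  rw [hm, Matrix.rank_zero, Nat.le_zero] at this
  exact Matrix.eq_zero_of_rank_eq_zero this

end Closure

theorem stmt_17 {K : Type*} [Field K] [IsAlgClosed K] (n : ℕ) (z : K)
    (mu : Nat.Partition n) :
    zariskiClosure (adjOrbit (jordanOf z mu))
        = {B | ∃ rho : Nat.Partition n, DominatedBy rho mu ∧ B ∈ adjOrbit (jordanOf z rho)}
      ∧ (∀ rho rho' : Nat.Partition n, rho ≠ rho' →
          Disjoint (adjOrbit (jordanOf (n := n) z rho)) (adjOrbit (jordanOf z rho')))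
      ∧ (∀ X : Matrix (Fin n) (Fin n) K, IsNilpotent (X - z • (1 : Matrix (Fin n) (Fin n) K)) →
          (X ∈ zariskiClosure (adjOrbit (jordanOf z mu)) ↔
            ∀ k : ℕ, 1 ≤ k →
              ((X - z • (1 : Matrix (Fin n) (Fin n) K)) ^ k).rank
                ≤ ((jordanOf z mu - z • (1 : Matrix (Fin n) (Fin n) K)) ^ k).rank)) := by
  have : Infinite K := IsAlgClosed.instInfinite
  have hJ := fun rho : n.Partition => isNilpotent_jordanOf_sub z rho
  refine ⟨?_, ?_, ?_⟩
  · ext X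
    rw [mem_zariskiClosure_adjOrbit_iff (hJ mu), Set.mem_ofPred_eq]
    constructor
    · rintro ⟨hX, hr⟩
      obtain ⟨rho, hrho⟩ := exists_mem_adjOrbit_jordanOf hX
      refine ⟨rho, dominatedBy_iff.2 fun k => ?_, hrho⟩
      rw [← rank_jordanOf_sub_pow z, ← rank_jordanOf_sub_pow z,
        ← ((mem_adjOrbit_iff_rank (hJ rho)).1 hrho).2]
      exact hr k
    · rintro ⟨rho, hdom, hX⟩
      obtain ⟨hnil, hr⟩ := (mem_adjOrbit_iff_rank (hJ rho)).1 hX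
      refine ⟨hnil, fun k => ?_⟩
      rw [hr, rank_jordanOf_sub_pow, rank_jordanOf_sub_pow]
      exact dominatedBy_iff.1 hdom k
  · intro rho rho' hne
    rw [Set.disjoint_left]
    intro X h h'
    refine hne (Nat.Partition.eq_of_excess_eq fun k => ?_)
    rw [← rank_jordanOf_sub_pow z, ← rank_jordanOf_sub_pow z,
      ← ((mem_adjOrbit_iff_rank (hJ rho)).1 h).2, ← ((mem_adjOrbit_iff_rank (hJ rho')).1 h').2]
  · intro X hX
    rw [mem_zariskiClosure_adjOrbit_iff (hJ mu)]
    refine ⟨fun h k _ => h.2 k, fun h => ⟨hX, fun k => ?_⟩⟩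
    rcases Nat.eq_zero_or_pos k with rfl | hk
    · simp
    · exact h k hk
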